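/- (Higher moment bound, off-diagonal case.) There is an absolute constant C > 0 with the following property: for all integers n ≥ 1 and all dimensions d with d > √6·(2n)^{7/4}, every CPTP map Φ on M_d(ℂ) given with a Kraus representation of r operators, and all s, t ∈ {1,…,d} with s ≠ t, ∫_{U(d)} (X_{st}(U))^n dμ(U) ≤ (1 + C·n²/d) · ( r·n·(d + n)/d² )^n. -/

import Mathlib

open MeasureTheory Matrix

noncomputable section

instance matrixMeasurableSpace {m n α : Type*} [MeasurableSpace α] :
    MeasurableSpace (Matrix m n α) :=
  inferInstanceAs (MeasurableSpace (m → n → α))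

/-- `X_{st}(U) = ∑_i |⟨e_t, U* K_i U e_s⟩|²`. -/
def Xst {d r : ℕ} (K : Fin r → Matrix (Fin d) (Fin d) ℂ) (s t : Fin d)
    (U : Matrix.unitaryGroup (Fin d) ℂ) : ℝ :=
  ∑ i, ‖(star (U : Matrix (Fin d) (Fin d) ℂ) * K i * (U : Matrix (Fin d) (Fin d) ℂ)) t s‖ ^ 2

/-!
Right translation by a unitary `V` fixing `e_s` keeps the vector `K_i U e_s` and moves `e_t` inside
the orthogonal complement of `e_s`. Letting `V e_t` run over the normalized sign vectors on
`{1, …, d} \ {s}` turns `X_{st}(UV)` into `(d - 1)⁻¹ ‖∑ ε_j b_j‖²`, where the vectors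
`b_j = ((U* K_i U)_{js})_i` satisfy `∑_j ‖b_j‖² = 1`. Khinchine's inequality bounds the average over
the signs of its `n`-th power by `(2n - 1)‼ / (d - 1)^n`, at every `U`; since the Haar measure is
right invariant, this also bounds the integral. Finally `(2n - 1)‼ ≤ n^n`, and
`n / (d - 1) ≤ n (d + n) / d²` as soon as `n ≥ 2`; only `n = 1` consumes the factor `1 + n² / d`.
-/

open Finset
open scoped Nat

section PowersAndFactorials

theorem add_pow_add_sub_pow {R : Type*} [CommRing R] (x y : R) (n : ℕ) :
    (x + y) ^ n + (x - y) ^ n =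
      ∑ k ∈ range (n + 1), (1 + (-1) ^ k) * (y ^ k * x ^ (n - k) * n.choose k) := by
  rw [add_comm x, sub_eq_neg_add, add_pow, add_pow, ← sum_add_distrib]
  refine sum_congr rfl fun k _ => ?_
  rw [neg_pow]
  ring

theorem add_pow_two_mul_add_sub_pow_two_mul {R : Type*} [CommRing R] (x y : R) (n : ℕ) :
    (x + y) ^ (2 * n) + (x - y) ^ (2 * n) =
      2 * ∑ k ∈ range (n + 1), y ^ (2 * k) * x ^ (2 * (n - k)) * (2 * n).choose (2 * k) := by
  rw [add_pow_add_sub_pow, mul_sum]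
  refine (sum_of_injOn (2 * ·) (fun _ _ _ _ h => by simpa using h) ?_ ?_ ?_).symm
  · intro k hk
    simp only [SetLike.mem_coe, mem_range] at hk ⊢
    lia
  · intro k hk hk'
    have : Odd k := by
      rw [← Nat.not_even_iff_odd]
      rintro ⟨j, rfl⟩
      exact hk' ⟨j, by simp only [SetLike.mem_coe, mem_range] at hk ⊢; lia, two_mul j⟩
    rw [this.neg_one_pow, add_neg_cancel, zero_mul]
  · intro k _
    rw [pow_mul (-1), neg_one_sq, one_pow, one_add_one_eq_two, Nat.mul_sub]

theorem add_pow_add_sub_pow_le_of_abs_le {x y z : ℝ} (hx : 0 ≤ x) (hy : |y| ≤ z) (n : ℕ) :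
    (x + y) ^ n + (x - y) ^ n ≤ (x + z) ^ n + (x - z) ^ n := by
  rw [add_pow_add_sub_pow, add_pow_add_sub_pow]
  refine sum_le_sum fun k _ => ?_
  rcases k.even_or_odd with hk | hk
  · rw [hk.neg_one_pow, ← hk.pow_abs y]
    gcongr
  · simp [hk.neg_one_pow]

theorem norm_add_pow_add_norm_sub_pow_le {E : Type*} [NormedAddCommGroup E]
    [InnerProductSpace ℝ E] (x y : E) (n : ℕ) :
    ‖x + y‖ ^ (2 * n) + ‖x - y‖ ^ (2 * n) ≤
      (‖x‖ + ‖y‖) ^ (2 * n) + (‖x‖ - ‖y‖) ^ (2 * n) := by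
  have hxy : |2 * inner ℝ x y| ≤ 2 * (‖x‖ * ‖y‖) := by
    rw [abs_mul, abs_two]
    gcongr
    exact abs_real_inner_le_norm x y
  convert add_pow_add_sub_pow_le_of_abs_le (x := ‖x‖ ^ 2 + ‖y‖ ^ 2) (by positivity) hxy n using 2
  all_goals
    rw [pow_mul]
    congr 1
  · rw [norm_add_sq_real]; ring
  · rw [norm_sub_sq_real]; ring
  · ring
  · ring

theorem factorial_two_mul_eq_doubleFactorial_mul (n : ℕ) :
    (2 * n)! = (2 * n - 1)‼ * (2 ^ n * n !) := by
  cases n with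
  | zero => rfl
  | succ n =>
    rw [← Nat.doubleFactorial_two_mul, mul_comm (_ - 1)‼]
    exact Nat.factorial_eq_mul_doubleFactorial (2 * n + 1)

theorem doubleFactorial_two_mul_sub_one_le (n : ℕ) : (2 * n - 1)‼ ≤ n ^ n := by
  refine Nat.le_of_mul_le_mul_right ?_ (by positivity : 0 < 2 ^ n * n !)
  calc (2 * n - 1)‼ * (2 ^ n * n !) = (2 * n)! := (factorial_two_mul_eq_doubleFactorial_mul n).symm
    _ ≤ (2 * n) ^ n * n ! := Nat.factorial_two_mul_le n
    _ = n ^ n * (2 ^ n * n !) := by ring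

theorem choose_two_mul_mul_doubleFactorial_le {n k : ℕ} (hk : k ≤ n) :
    (2 * n).choose (2 * k) * (2 * (n - k) - 1)‼ ≤ (2 * n - 1)‼ * n.choose k := by
  refine Nat.le_of_mul_le_mul_right ?_ (by positivity : 0 < (2 * k)! * (2 ^ (n - k) * (n - k)!))
  calc (2 * n).choose (2 * k) * (2 * (n - k) - 1)‼ * ((2 * k)! * (2 ^ (n - k) * (n - k)!))
      = (2 * n).choose (2 * k) * (2 * k)! * (2 * n - 2 * k)! := by
        rw [← Nat.mul_sub, factorial_two_mul_eq_doubleFactorial_mul (n - k)]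
        ring
    _ = (2 * n - 1)‼ * (2 ^ n * n !) := by
        rw [Nat.choose_mul_factorial_mul_factorial (by lia),
          factorial_two_mul_eq_doubleFactorial_mul]
    _ = (2 * n - 1)‼ * n.choose k * (2 ^ k * k ! * (2 ^ (n - k) * (n - k)!)) := by
        rw [← Nat.choose_mul_factorial_mul_factorial hk, ← pow_mul_pow_sub 2 hk]
        ring
    _ ≤ (2 * n - 1)‼ * n.choose k * ((2 * k)! * (2 ^ (n - k) * (n - k)!)) := by
        gcongr
        exact Nat.two_pow_mul_factorial_le_factorial_two_mul k

theorem sum_choose_mul_doubleFactorial_le {y w : ℝ} (hy : 0 ≤ y) (hw : 0 ≤ w) (n : ℕ) :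
    ∑ k ∈ range (n + 1), y ^ k * (2 * n).choose (2 * k) * ((2 * (n - k) - 1)‼ * w ^ (n - k)) ≤
      (2 * n - 1)‼ * (y + w) ^ n := by
  rw [add_pow, mul_sum]
  refine sum_le_sum fun k hk => ?_
  have hchoose : ((2 * n).choose (2 * k) * (2 * (n - k) - 1)‼ : ℝ) ≤ (2 * n - 1)‼ * n.choose k :=
    mod_cast choose_two_mul_mul_doubleFactorial_le (mem_range_succ_iff.mp hk)
  calc y ^ k * (2 * n).choose (2 * k) * ((2 * (n - k) - 1)‼ * w ^ (n - k))
      = y ^ k * w ^ (n - k) * ((2 * n).choose (2 * k) * (2 * (n - k) - 1)‼) := by ring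
    _ ≤ y ^ k * w ^ (n - k) * ((2 * n - 1)‼ * n.choose k) := by gcongr
    _ = (2 * n - 1)‼ * (y ^ k * w ^ (n - k) * n.choose k) := by ring

end PowersAndFactorials

section Khinchine

variable {E ι : Type*} [DecidableEq ι]

/-- The Rademacher sum `∑ j ∈ A, ε j • b j`, whose signs `ε` are encoded by the set `T` of the
indices with sign `+1`; the random signs on `A` are the elements `T` of `A.powerset`. -/
def signedSum [AddCommGroup E] (b : ι → E) (A T : Finset ι) : E :=
  ∑ j ∈ A, if j ∈ T then b j else -b j

theorem signedSum_insert_insert [AddCommGroup E] {b : ι → E} {A : Finset ι} {a : ι}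
    (ha : a ∉ A) (T : Finset ι) :
    signedSum b (insert a A) (insert a T) = signedSum b A T + b a := by
  rw [signedSum, sum_insert ha, if_pos (mem_insert_self a T), add_comm, signedSum]
  congr 1
  refine sum_congr rfl fun j hj => ?_
  simp [ne_of_mem_of_not_mem hj ha]

theorem signedSum_insert_of_notMem [AddCommGroup E] {b : ι → E} {A T : Finset ι} {a : ι}
    (ha : a ∉ A) (haT : a ∉ T) :
    signedSum b (insert a A) T = signedSum b A T - b a := by
  rw [signedSum, sum_insert ha, if_neg haT, neg_add_eq_sub, signedSum]

variable [NormedAddCommGroup E] [InnerProductSpace ℝ E]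

theorem sum_norm_signedSum_insert_pow_le (b : ι → E) {A : Finset ι} {a : ι} (ha : a ∉ A) (n : ℕ) :
    ∑ T ∈ (insert a A).powerset, ‖signedSum b (insert a A) T‖ ^ (2 * n) ≤
      2 * ∑ k ∈ range (n + 1), (‖b a‖ ^ 2) ^ k * (2 * n).choose (2 * k) *
        ∑ T ∈ A.powerset, ‖signedSum b A T‖ ^ (2 * (n - k)) := by
  calc ∑ T ∈ (insert a A).powerset, ‖signedSum b (insert a A) T‖ ^ (2 * n)
      = ∑ T ∈ A.powerset,
          (‖signedSum b A T + b a‖ ^ (2 * n) + ‖signedSum b A T - b a‖ ^ (2 * n)) := by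
        rw [sum_powerset_insert ha, add_comm, ← sum_add_distrib]
        refine sum_congr rfl fun T hT => ?_
        rw [signedSum_insert_insert ha,
          signedSum_insert_of_notMem ha (notMem_mono (mem_powerset.mp hT) ha)]
    _ ≤ ∑ T ∈ A.powerset, 2 * ∑ k ∈ range (n + 1),
          ‖b a‖ ^ (2 * k) * ‖signedSum b A T‖ ^ (2 * (n - k)) * (2 * n).choose (2 * k) := by
        gcongr with T
        rw [← add_pow_two_mul_add_sub_pow_two_mul]
        exact norm_add_pow_add_norm_sub_pow_le _ _ n
    _ = 2 * ∑ k ∈ range (n + 1), (‖b a‖ ^ 2) ^ k * (2 * n).choose (2 * k) *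
          ∑ T ∈ A.powerset, ‖signedSum b A T‖ ^ (2 * (n - k)) := by
        simp_rw [← mul_sum, ← pow_mul]
        rw [sum_comm]
        simp_rw [mul_sum, mul_right_comm]

theorem sum_norm_signedSum_pow_le (b : ι → E) (A : Finset ι) (n : ℕ) :
    ∑ T ∈ A.powerset, ‖signedSum b A T‖ ^ (2 * n) ≤
      2 ^ #A * ((2 * n - 1)‼ * (∑ j ∈ A, ‖b j‖ ^ 2) ^ n) := by
  induction A using Finset.induction_on generalizing n with
  | empty => cases n <;> simp [signedSum]
  | insert a A ha ih =>
    calc ∑ T ∈ (insert a A).powerset, ‖signedSum b (insert a A) T‖ ^ (2 * n)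
        ≤ 2 * ∑ k ∈ range (n + 1), (‖b a‖ ^ 2) ^ k * (2 * n).choose (2 * k) *
            ∑ T ∈ A.powerset, ‖signedSum b A T‖ ^ (2 * (n - k)) :=
          sum_norm_signedSum_insert_pow_le b ha n
      _ ≤ 2 * ∑ k ∈ range (n + 1), (‖b a‖ ^ 2) ^ k * (2 * n).choose (2 * k) *
            (2 ^ #A * ((2 * (n - k) - 1)‼ * (∑ j ∈ A, ‖b j‖ ^ 2) ^ (n - k))) := by
          gcongr with k
          exact ih (n - k)
      _ = 2 ^ #(insert a A) * ∑ k ∈ range (n + 1), (‖b a‖ ^ 2) ^ k * (2 * n).choose (2 * k) *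
            ((2 * (n - k) - 1)‼ * (∑ j ∈ A, ‖b j‖ ^ 2) ^ (n - k)) := by
          simp_rw [mul_left_comm _ ((2 : ℝ) ^ #A), ← mul_sum]
          rw [card_insert_of_notMem ha, pow_succ']
          ring
      _ ≤ 2 ^ #(insert a A) * ((2 * n - 1)‼ * (∑ j ∈ insert a A, ‖b j‖ ^ 2) ^ n) := by
          rw [sum_insert ha]
          gcongr
          exact sum_choose_mul_doubleFactorial_le (by positivity) (by positivity) n

end Khinchine

section Averaging

variable {G : Type*} [Group G] [MeasurableSpace G]

theorem isMulRightInvariant_of_isMulLeftInvariant [MeasurableMul₂ G] [MeasurableInv G]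
    (μ : Measure G) [IsFiniteMeasure μ] [μ.IsMulLeftInvariant] : μ.IsMulRightInvariant where
  map_mul_right_eq_self g := by
    rcases eq_zero_or_neZero μ with rfl | _
    · simp
    have huniv : μ.map (· * g) Set.univ = μ Set.univ := by
      rw [Measure.map_apply (measurable_mul_const g) .univ, Set.preimage_univ]
    rw [measure_eq_div_smul (μ.map (· * g)) μ (s := Set.univ) (NeZero.ne _) (measure_ne_top _ _),
      huniv, ENNReal.div_self (NeZero.ne _) (measure_ne_top _ _), one_smul]

theorem integral_le_of_forall_sum_mul_right_le {κ : Type*} [MeasurableMul G] {μ : Measure G}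
    [IsProbabilityMeasure μ] [μ.IsMulRightInvariant] {f : G → ℝ} (hf : Integrable f μ)
    {S : Finset κ} (hS : S.Nonempty) (g : κ → G) {c : ℝ}
    (h : ∀ x, ∑ i ∈ S, f (x * g i) ≤ #S * c) : ∫ x, f x ∂μ ≤ c := by
  refine le_of_mul_le_mul_left ?_ (Nat.cast_pos.mpr hS.card_pos : (0 : ℝ) < #S)
  calc #S * ∫ x, f x ∂μ
      = ∑ i ∈ S, ∫ x, f (x * g i) ∂μ := by simp [integral_mul_right_eq_self]
    _ = ∫ x, ∑ i ∈ S, f (x * g i) ∂μ :=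
        (integral_finsetSum _ fun i _ => hf.comp_mul_right (g i)).symm
    _ ≤ ∫ _, #S * c ∂μ :=
        integral_mono (integrable_finsetSum _ fun i _ => hf.comp_mul_right (g i))
          (integrable_const _) h
    _ = #S * c := by simp

end Averaging

section BorelSpace

variable {m n α : Type*} [Countable m] [Countable n] [TopologicalSpace α]
  [SecondCountableTopology α]

instance matrixSecondCountableTopology : SecondCountableTopology (Matrix m n α) :=
  inferInstanceAs (SecondCountableTopology (m → n → α))

instance matrixBorelSpace [MeasurableSpace α] [BorelSpace α] : BorelSpace (Matrix m n α) :=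
  inferInstanceAs (BorelSpace (m → n → α))

instance unitarySecondCountableTopology {R : Type*} [Monoid R] [StarMul R]
    [TopologicalSpace R] [SecondCountableTopology R] : SecondCountableTopology (unitary R) :=
  TopologicalSpace.Subtype.secondCountableTopology _

end BorelSpace

section Unitary

variable {𝕜 ι κ : Type*} [RCLike 𝕜] [Fintype ι] [DecidableEq ι]

theorem exists_unitaryGroup_col_eq {f : κ → ι} (hf : f.Injective) {w : κ → EuclideanSpace 𝕜 ι}
    (hw : Orthonormal 𝕜 w) :
    ∃ V : unitaryGroup ι 𝕜, ∀ j k, V j (f k) = w k j := by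
  have hv : Orthonormal 𝕜 ((Set.range f).domRestrict (Function.extend f w 0)) := by
    convert hw.comp _ (Equiv.ofInjective f hf).symm.injective
    ext ⟨_, k, rfl⟩ : 1
    simp [hf.extend_apply, Equiv.ofInjective_symm_apply]
  obtain ⟨b, hb⟩ := hv.exists_orthonormalBasis_extension_of_card_eq (by simp)
  refine ⟨⟨_, (EuclideanSpace.basisFun ι 𝕜).toMatrix_orthonormalBasis_mem_unitary b⟩, fun j k => ?_⟩
  simp [Module.Basis.toMatrix_apply, hb (f k) ⟨k, rfl⟩, hf.extend_apply]

variable (𝕜) in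
/-- The normalized sign vector on `A`: its entries are `± (√#A)⁻¹` on `A` and `0` elsewhere, so it
is `0`, not a unit vector, if `A = ∅`. As in `signedSum`, the signs are encoded by the set `T` of
the indices with sign `+1`. Such vectors serve as the column `V e_t` of a random unitary `V`. -/
def signVector (A T : Finset ι) : EuclideanSpace 𝕜 ι :=
  WithLp.toLp 2 fun j => if j ∈ A then (if j ∈ T then 1 else -1) * ((√(#A : ℝ))⁻¹ : ℝ) else 0

theorem norm_signVector {A : Finset ι} (hA : A.Nonempty) (T : Finset ι) :
    ‖signVector 𝕜 A T‖ = 1 := by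
  have hentry (j : ι) : ‖signVector 𝕜 A T j‖ ^ 2 = if j ∈ A then (#A : ℝ)⁻¹ else 0 := by
    simp only [signVector]
    split_ifs <;> simp
  rw [← sq_eq_sq₀ (norm_nonneg _) zero_le_one, EuclideanSpace.norm_sq_eq]
  simp [hentry, hA.ne_empty]

theorem sum_star_signVector_smul {E : Type*} [AddCommGroup E] [Module 𝕜 E]
    (A T : Finset ι) (b : ι → E) :
    ∑ j, star (signVector 𝕜 A T j) • b j = ((√(#A : ℝ))⁻¹ : 𝕜) • signedSum b A T := by
  rw [signedSum, smul_sum, ← sum_subset (subset_univ A) fun j _ hj => by simp [signVector, hj]]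
  refine sum_congr rfl fun j hj => ?_
  by_cases hT : j ∈ T <;> simp [signVector, hj, hT]

theorem exists_unitaryGroup_col_eq_single_and_col_eq_signVector {s t : ι} (hst : s ≠ t)
    (T : Finset ι) :
    ∃ V : unitaryGroup ι 𝕜, (∀ j, V j s = (Pi.single s 1 : ι → 𝕜) j) ∧
      ∀ j, V j t = signVector 𝕜 (univ.erase s) T j := by
  have hA : (univ.erase s).Nonempty := ⟨t, by simp [hst.symm]⟩
  have horth : Orthonormal 𝕜 ![EuclideanSpace.single s 1, signVector 𝕜 (univ.erase s) T] := by
    have hs : signVector 𝕜 (univ.erase s) T s = 0 := by simp [signVector]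
    simp [orthonormal_vecCons_iff, norm_signVector hA, EuclideanSpace.inner_single_left, hs]
  have hinj : (![s, t]).Injective := by
    simp [Function.Injective, Fin.forall_fin_two, hst, hst.symm]
  obtain ⟨V, hV⟩ := exists_unitaryGroup_col_eq hinj horth
  exact ⟨V, fun j => hV j 0, fun j => hV j 1⟩

/-- The Kraus operators `U* K_i U` of the channel `Φ` seen in the orthonormal basis formed by the
columns of `U`. -/
def unitaryConj (K : κ → Matrix ι ι 𝕜) (U : unitaryGroup ι 𝕜) (i : κ) : Matrix ι ι 𝕜 :=
  star (U : Matrix ι ι 𝕜) * K i * (U : Matrix ι ι 𝕜)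

/-- The vector `((K_i)_{js})_i` indexed by the Kraus index `i`; for `K_i` replaced by `U* K_i U`,
its squared norm is `X_{sj}(U)`. -/
def entryVector (K : κ → Matrix ι ι 𝕜) (j s : ι) : EuclideanSpace 𝕜 κ :=
  WithLp.toLp 2 fun i => K i j s

theorem unitaryConj_mul (K : κ → Matrix ι ι 𝕜) (U V : unitaryGroup ι 𝕜) :
    unitaryConj K (U * V) = unitaryConj (unitaryConj K U) V := by
  funext i
  simp [unitaryConj, Matrix.mul_assoc]

theorem entryVector_unitaryConj (K : κ → Matrix ι ι 𝕜) {V : unitaryGroup ι 𝕜} {s : ι}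
    (hV : ∀ j, V j s = (Pi.single s 1 : ι → 𝕜) j) (t : ι) :
    entryVector (unitaryConj K V) t s = ∑ j, star (V j t) • entryVector K j s := by
  have hcol (i : κ) (j : ι) : (K i * (V : Matrix ι ι 𝕜)) j s = K i j s := by
    simp [mul_apply, hV, Pi.single_apply]
  ext i
  simp [entryVector, unitaryConj, Matrix.mul_assoc, mul_apply (M := star _), hcol]

variable [Fintype κ] {K : κ → Matrix ι ι 𝕜}

theorem sum_conjTranspose_mul_unitaryConj (hK : ∑ i, (K i)ᴴ * K i = 1)
    (U : unitaryGroup ι 𝕜) :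
    ∑ i, (unitaryConj K U i)ᴴ * unitaryConj K U i = 1 := by
  have hterm (i : κ) : (unitaryConj K U i)ᴴ * unitaryConj K U i =
      star (U : Matrix ι ι 𝕜) * ((K i)ᴴ * K i) * (U : Matrix ι ι 𝕜) := by
    simp only [unitaryConj, star_eq_conjTranspose, conjTranspose_mul, conjTranspose_conjTranspose,
      Matrix.mul_assoc]
    rw [← Matrix.mul_assoc (U : Matrix ι ι 𝕜) (U : Matrix ι ι 𝕜)ᴴ,
      ← star_eq_conjTranspose (U : Matrix ι ι 𝕜), mem_unitaryGroup_iff.mp U.2, Matrix.one_mul]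
  simp [hterm, ← Finset.sum_mul, ← Finset.mul_sum, hK]

theorem sum_norm_sq_entryVector (hK : ∑ i, (K i)ᴴ * K i = 1) (s : ι) :
    ∑ j, ‖entryVector K j s‖ ^ 2 = 1 := by
  have hss : ∑ i, ∑ j, star (K i j s) * K i j s = 1 := by
    simpa [Matrix.sum_apply, mul_apply] using congrFun₂ hK s s
  simp_rw [EuclideanSpace.norm_sq_eq, entryVector]
  rw [sum_comm, ← RCLike.ofReal_inj (K := 𝕜)]
  simpa [RCLike.conj_mul] using hss

end Unitary

section Moments

variable {d r : ℕ} {K : Fin r → Matrix (Fin d) (Fin d) ℂ} {s t : Fin d}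

theorem Xst_eq_norm_sq (K : Fin r → Matrix (Fin d) (Fin d) ℂ) (s t : Fin d)
    (U : unitaryGroup (Fin d) ℂ) : Xst K s t U = ‖entryVector (unitaryConj K U) t s‖ ^ 2 := by
  rw [EuclideanSpace.norm_sq_eq]
  rfl

theorem continuous_Xst (K : Fin r → Matrix (Fin d) (Fin d) ℂ) (s t : Fin d) :
    Continuous (Xst K s t) := by
  unfold Xst
  fun_prop

theorem Xst_le_one (hK : ∑ i, (K i)ᴴ * K i = 1) (U : unitaryGroup (Fin d) ℂ) : Xst K s t U ≤ 1 := by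
  rw [Xst_eq_norm_sq,
    ← sum_norm_sq_entryVector (sum_conjTranspose_mul_unitaryConj hK U) s]
  exact single_le_sum (f := fun j => ‖entryVector (unitaryConj K U) j s‖ ^ 2)
    (fun _ _ => sq_nonneg _) (mem_univ t)

theorem integrable_Xst_pow (hK : ∑ i, (K i)ᴴ * K i = 1) (s t : Fin d) (n : ℕ)
    (μ : Measure (unitaryGroup (Fin d) ℂ)) [IsFiniteMeasure μ] :
    Integrable (fun U => Xst K s t U ^ n) μ := by
  refine .of_bound ((continuous_Xst K s t).pow n).aestronglyMeasurable 1 (.of_forall fun U => ?_)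
  have hnonneg : 0 ≤ Xst K s t U := Xst_eq_norm_sq K s t U ▸ sq_nonneg _
  rw [norm_pow, Real.norm_of_nonneg hnonneg]
  exact pow_le_one₀ hnonneg (Xst_le_one hK U)

theorem Xst_mul_eq_norm_signedSum_sq_div {V : unitaryGroup (Fin d) ℂ} {T : Finset (Fin d)}
    (hs : ∀ j, V j s = (Pi.single s 1 : Fin d → ℂ) j)
    (ht : ∀ j, V j t = signVector ℂ (univ.erase s) T j) (U : unitaryGroup (Fin d) ℂ) :
    Xst K s t (U * V) =
      ‖signedSum (entryVector (unitaryConj K U) · s) (univ.erase s) T‖ ^ 2 / #(univ.erase s) := by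
  rw [Xst_eq_norm_sq, unitaryConj_mul, entryVector_unitaryConj _ hs]
  simp_rw [ht]
  rw [sum_star_signVector_smul, norm_smul, mul_pow, norm_inv, RCLike.norm_ofReal, inv_pow, sq_abs,
    Real.sq_sqrt (Nat.cast_nonneg _), inv_mul_eq_div]

theorem sum_powerset_Xst_mul_pow_le (hK : ∑ i, (K i)ᴴ * K i = 1)
    {V : Finset (Fin d) → unitaryGroup (Fin d) ℂ}
    (hs : ∀ T j, V T j s = (Pi.single s 1 : Fin d → ℂ) j)
    (ht : ∀ T j, V T j t = signVector ℂ (univ.erase s) T j) (U : unitaryGroup (Fin d) ℂ) (n : ℕ) :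
    ∑ T ∈ (univ.erase s).powerset, Xst K s t (U * V T) ^ n ≤
      2 ^ #(univ.erase s) * ((2 * n - 1)‼ / #(univ.erase s) ^ n) := by
  let b (j : Fin d) : EuclideanSpace ℂ (Fin r) := entryVector (unitaryConj K U) j s
  have hb : ∑ j ∈ univ.erase s, ‖b j‖ ^ 2 ≤ 1 := by
    rw [← sum_norm_sq_entryVector (sum_conjTranspose_mul_unitaryConj hK U) s]
    exact sum_le_univ_sum_of_nonneg fun j => sq_nonneg ‖b j‖
  calc ∑ T ∈ (univ.erase s).powerset, Xst K s t (U * V T) ^ n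
      = (∑ T ∈ (univ.erase s).powerset, ‖signedSum b (univ.erase s) T‖ ^ (2 * n)) /
          #(univ.erase s) ^ n := by
        simp_rw [sum_div, Xst_mul_eq_norm_signedSum_sq_div (hs _) (ht _) U, div_pow, pow_mul, b]
    _ ≤ 2 ^ #(univ.erase s) * ((2 * n - 1)‼ * 1 ^ n) / #(univ.erase s) ^ n := by
        grw [sum_norm_signedSum_pow_le, hb]
    _ = 2 ^ #(univ.erase s) * ((2 * n - 1)‼ / #(univ.erase s) ^ n) := by
        rw [one_pow, mul_one, mul_div_assoc]

theorem integral_Xst_pow_le (μ : Measure (unitaryGroup (Fin d) ℂ)) [IsProbabilityMeasure μ]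
    [μ.IsMulLeftInvariant] (hK : ∑ i, (K i)ᴴ * K i = 1) (hst : s ≠ t) (n : ℕ) :
    ∫ U, Xst K s t U ^ n ∂μ ≤ (2 * n - 1)‼ / (d - 1 : ℝ) ^ n := by
  have := isMulRightInvariant_of_isMulLeftInvariant μ
  choose V hs ht using exists_unitaryGroup_col_eq_single_and_col_eq_signVector (𝕜 := ℂ) hst
  have hcard : (#(univ.erase s) : ℝ) = d - 1 := by
    rw [card_erase_of_mem (mem_univ s), card_fin, Nat.cast_pred s.pos]
  rw [← hcard]
  refine integral_le_of_forall_sum_mul_right_le (integrable_Xst_pow hK s t n μ)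
    (powerset_nonempty (univ.erase s)) V fun U => ?_
  rw [card_powerset, Nat.cast_pow, Nat.cast_two]
  exact sum_powerset_Xst_mul_pow_le hK hs ht U n

end Moments

theorem div_sub_one_le_mul_add_div_sq {n d : ℝ} (hd : 2 ≤ d) (hn : 2 ≤ n) :
    n / (d - 1) ≤ n * (d + n) / d ^ 2 := by
  rw [div_le_div_iff₀ (by linarith) (by positivity), mul_assoc]
  gcongr
  nlinarith

theorem div_sub_one_pow_le_one_add_mul_pow {d r : ℝ} (hd : 2 ≤ d) (hr : 1 ≤ r) (n : ℕ) :
    (n / (d - 1)) ^ n ≤ (1 + n ^ 2 / d) * (r * n * (d + n) / d ^ 2) ^ n := by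
  have hd1 : 0 < d - 1 := by linarith
  suffices h : (n / (d - 1)) ^ n ≤ (1 + n ^ 2 / d) * (n * (d + n) / d ^ 2) ^ n by
    refine h.trans ?_
    gcongr
    exact le_mul_of_one_le_left n.cast_nonneg hr
  obtain rfl | rfl | hn : n = 0 ∨ n = 1 ∨ 2 ≤ n := by lia
  · simp
  · norm_num
    field_simp
    nlinarith
  · calc (n / (d - 1)) ^ n ≤ (n * (d + n) / d ^ 2) ^ n := by
          gcongr ?_ ^ n
          exact div_sub_one_le_mul_add_div_sq hd (mod_cast hn)
      _ ≤ (1 + n ^ 2 / d) * (n * (d + n) / d ^ 2) ^ n :=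
          le_mul_of_one_le_left (by positivity) (le_add_of_nonneg_right (by positivity))

theorem higher_moment_bound_offdiag_general {d r : ℕ} (n : ℕ)
    (μ : Measure (unitaryGroup (Fin d) ℂ)) [IsProbabilityMeasure μ] [μ.IsMulLeftInvariant]
    {K : Fin r → Matrix (Fin d) (Fin d) ℂ} (hK : ∑ i, (K i)ᴴ * K i = 1) {s t : Fin d}
    (hst : s ≠ t) :
    ∫ U, Xst K s t U ^ n ∂μ ≤ (1 + (n : ℝ) ^ 2 / d) * (r * n * (d + n) / (d : ℝ) ^ 2) ^ n := by
  have : Nontrivial (Fin d) := ⟨s, t, hst⟩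
  have hd : (2 : ℝ) ≤ d := mod_cast Fin.nontrivial_iff_two_le.mp this
  have hr : (1 : ℝ) ≤ r := by
    obtain ⟨i, -⟩ := nonempty_of_sum_ne_zero (hK.trans_ne one_ne_zero)
    exact mod_cast i.pos
  have hd1 : (0 : ℝ) ≤ d - 1 := by linarith
  calc ∫ U, Xst K s t U ^ n ∂μ ≤ (2 * n - 1)‼ / (d - 1 : ℝ) ^ n := integral_Xst_pow_le μ hK hst n
    _ ≤ n ^ n / (d - 1 : ℝ) ^ n := by
        gcongr
        exact mod_cast doubleFactorial_two_mul_sub_one_le n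
    _ = (n / (d - 1)) ^ n := (div_pow _ _ n).symm
    _ ≤ (1 + (n : ℝ) ^ 2 / d) * (r * n * (d + n) / (d : ℝ) ^ 2) ^ n :=
        div_sub_one_pow_le_one_add_mul_pow hd hr n

/-- Higher moment bound, off-diagonal case. -/
theorem higher_moment_bound_offdiag :
    ∃ C : ℝ, 0 < C ∧
      ∀ (n d r : ℕ), 1 ≤ n →
        Real.sqrt 6 * ((2 * n : ℕ) : ℝ) ^ ((7 : ℝ) / 4) < (d : ℝ) →
        ∀ (μ : Measure (Matrix.unitaryGroup (Fin d) ℂ)),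
          IsProbabilityMeasure μ → μ.IsMulLeftInvariant →
          ∀ (K : Fin r → Matrix (Fin d) (Fin d) ℂ),
            (∑ i, (K i)ᴴ * K i = 1) →
            ∀ (s t : Fin d), s ≠ t →
              ∫ U, (Xst K s t U) ^ n ∂μ ≤
                (1 + C * (n : ℝ) ^ 2 / d) *
                  ((r : ℝ) * n * ((d : ℝ) + n) / (d : ℝ) ^ 2) ^ n := by
  exact ⟨1, one_pos, fun n d r _ _ μ _ _ K hK s t hst => by
    simpa only [one_mul] using higher_moment_bound_offdiag_general n μ hK hst⟩

end
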